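/- For every n ≥ 1, every subset A ⊆ {1,…,n}, and every k with 1 ≤ k ≤ n, the set-alternating domain D_A on {1,…,n} is (k, 2^{k-1})-abundant: its restriction to every k-element subset of {1,…,n} contains at least 2^{k-1} distinct linear orders. Moreover, if k < n/2 then D_A is exactly (k, 2^{k-1})-abundant, i.e., some k-element subset has restriction of size exactly 2^{k-1}. -/

import Mathlib

/-- `r` is a strict total order on `X`, supported on `X` (i.e. `r` never relates
elements outside `X`). -/
def IsLinearOrderOn {α : Type*} (X : Set α) (r : α → α → Prop) : Prop :=
  (∀ a b, r a b → a ∈ X ∧ b ∈ X) ∧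
  (∀ a ∈ X, ¬ r a a) ∧
  (∀ a ∈ X, ∀ b ∈ X, ∀ c ∈ X, r a b → r b c → r a c) ∧
  (∀ a ∈ X, ∀ b ∈ X, a ≠ b → r a b ∨ r b a)

/-- A domain on `X` is a set of linear orders on `X`. -/
def IsDomainOn {α : Type*} (X : Set α) (D : Set (α → α → Prop)) : Prop :=
  ∀ r ∈ D, IsLinearOrderOn X r

/-- The restriction of the order `r` to the subset `A`. -/
def restrictRel {α : Type*} (A : Set α) (r : α → α → Prop) : α → α → Prop :=
  fun a b => a ∈ A ∧ b ∈ A ∧ r a b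

/-- The restriction of the domain `D` to the subset `A`: the set of linear orders
on `A` induced by the orders in `D`. -/
def restrictDom {α : Type*} (A : Set α) (D : Set (α → α → Prop)) :
    Set (α → α → Prop) :=
  restrictRel A '' D

/-- `D` is `(k,s)`-abundant on `X`: its restriction to every `k`-element subset of `X`
contains at least `s` distinct linear orders. -/
def IsAbundant {α : Type*} (X : Set α) (D : Set (α → α → Prop)) (k s : ℕ) : Prop :=
  ∀ A : Set α, A ⊆ X → A.ncard = k → s ≤ (restrictDom A D).ncard

/-- `D` is exactly `(k,s)`-abundant: `(k,s)`-abundant but not `(k,s+1)`-abundant. -/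
def IsExactlyAbundant {α : Type*} (X : Set α) (D : Set (α → α → Prop)) (k s : ℕ) : Prop :=
  IsAbundant X D k s ∧ ¬ IsAbundant X D k (s + 1)

/-- The set-alternating domain `D_A` on `{1,…,n}` determined by `A ⊆ {1,…,n}`:
all linear orders `r` on `{1,…,n}` such that for every triple `a < b < c`,
if `b ∈ A` then `r` does not rank `a` last among `{a,b,c}`, and if `b ∉ A` then
`r` does not rank `c` first among `{a,b,c}`. -/
def setAlternating (n : ℕ) (A : Set ℕ) : Set (ℕ → ℕ → Prop) :=
  { r | IsLinearOrderOn (Set.Icc 1 n) r ∧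
      ∀ a b c : ℕ, a ∈ Set.Icc 1 n → b ∈ Set.Icc 1 n → c ∈ Set.Icc 1 n →
        a < b → b < c →
          (b ∈ A → ¬ (r b a ∧ r c a)) ∧ (b ∉ A → ¬ (r c a ∧ r c b)) }

/-!
Lower bound. Partition the alternatives into intervals, called blocks, list them increasingly, and
inside each block list first its greatest element and its inner elements outside `A`, then its least
element and its inner elements in `A`, both parts increasingly. A pair is inverted only if it lies
in one block, with its smaller element in the second part and its larger element in the first, so an
inner element of a block never violates its condition: every such order lies in `D_A`. Given a
`(k + 1)`-element set `B`, any set `S` of non-maximal elements of `B` prescribes which elements of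
`B` share a block with their successor in `B`. As the least and the greatest element of a block are
inverted, `S` can be read off the restriction to `B`, which gives `2 ^ k` restrictions.

Upper bound. If all elements of `B` strictly between `1` and `n` lie in `A`, then no `a ∈ B` comes
after two larger elements of `B`, so `a` is overtaken by at most one larger element, namely the
first one above it which is not itself overtaken. The restriction is thus determined by the set of
overtaken elements, a subset of the non-maximal elements of `B`. The case where these elements avoid
`A` is dual, and one of the two cases can be achieved as soon as `2 * k ≤ n + 1`.
-/

section Relations

variable {α : Type*} {X B : Set α} {r : α → α → Prop}

theorem restrictRel_restrictRel (hBX : B ⊆ X) (r : α → α → Prop) :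
    restrictRel B (restrictRel X r) = restrictRel B r := by
  funext a b
  exact propext ⟨fun h => ⟨h.1, h.2.1, h.2.2.2.2⟩, fun h => ⟨h.1, h.2.1, hBX h.1, hBX h.2.1, h.2.2⟩⟩

theorem finite_restrictDom (hB : B.Finite) (D : Set (α → α → Prop)) :
    (restrictDom B D).Finite := by
  have : Finite B := hB
  refine (Set.finite_range fun (s : B → B → Prop) (a b : α) =>
    ∃ (ha : a ∈ B) (hb : b ∈ B), s ⟨a, ha⟩ ⟨b, hb⟩).subset ?_
  rintro _ ⟨r, -, rfl⟩
  refine ⟨fun a b => r a b, ?_⟩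
  funext a b
  simp [restrictRel, and_left_comm]

theorem isLinearOrderOn_restrictRel_of_injective {γ : Type*} [LinearOrder γ] {key : α → γ}
    (hkey : Function.Injective key) (X : Set α) :
    IsLinearOrderOn X (restrictRel X fun a b => key a < key b) :=
  ⟨fun _ _ h => ⟨h.1, h.2.1⟩, fun _ _ h => lt_irrefl _ h.2.2,
    fun _ ha _ _ _ hc hab hbc => ⟨ha, hc, hab.2.2.trans hbc.2.2⟩,
    fun _ ha _ hb hab => (lt_or_gt_of_ne (hkey.ne hab)).imp (⟨ha, hb, ·⟩) (⟨hb, ha, ·⟩)⟩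

namespace IsLinearOrderOn

protected theorem restrictRel (hr : IsLinearOrderOn X r) (hBX : B ⊆ X) :
    IsLinearOrderOn B (restrictRel B r) := by
  obtain ⟨-, irrefl, trans, total⟩ := hr
  exact ⟨fun _ _ h => ⟨h.1, h.2.1⟩, fun a ha h => irrefl a (hBX ha) h.2.2,
    fun a ha b hb c hc hab hbc =>
      ⟨ha, hc, trans a (hBX ha) b (hBX hb) c (hBX hc) hab.2.2 hbc.2.2⟩,
    fun a ha b hb hab =>
      (total a (hBX ha) b (hBX hb) hab).imp (⟨ha, hb, ·⟩) (⟨hb, ha, ·⟩)⟩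

protected theorem flip (hr : IsLinearOrderOn X r) : IsLinearOrderOn X (flip r) := by
  obtain ⟨support, irrefl, trans, total⟩ := hr
  exact ⟨fun a b h => (support b a h).symm, irrefl,
    fun a ha b hb c hc hab hbc => trans c hc b hb a ha hbc hab,
    fun a ha b hb hab => (total a ha b hb hab).symm⟩

theorem not_iff_swap (hr : IsLinearOrderOn X r) {a b : α} (ha : a ∈ X) (hb : b ∈ X)
    (hab : a ≠ b) : ¬ r b a ↔ r a b := by
  obtain ⟨-, irrefl, trans, total⟩ := hr
  exact ⟨(total a ha b hb hab).resolve_right,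
    fun h h' => irrefl a ha (trans a ha b hb a ha h h')⟩

theorem ext_of_inversions [LinearOrder α] {r' : α → α → Prop} (hr : IsLinearOrderOn X r)
    (hr' : IsLinearOrderOn X r') (h : ∀ a ∈ X, ∀ b ∈ X, a < b → (r b a ↔ r' b a)) : r = r' := by
  funext a b
  refine propext ?_
  by_cases hX : a ∈ X ∧ b ∈ X
  · obtain ⟨ha, hb⟩ := hX
    rcases lt_trichotomy a b with hab | rfl | hba
    · rw [← hr.not_iff_swap ha hb hab.ne, ← hr'.not_iff_swap ha hb hab.ne, h a ha b hb hab]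
    · exact iff_of_false (hr.2.1 a ha) (hr'.2.1 a ha)
    · exact h b hb a ha hba
  · exact iff_of_false (fun hab => hX (hr.1 a b hab)) (fun hab => hX (hr'.1 a b hab))

end IsLinearOrderOn

end Relations

section NonMax

variable {α : Type*} [LinearOrder α] {B : Set α}

/-- The non-maximal elements of `B`. Their subsets index the restrictions to `B` in both bounds. -/
def nonMax (B : Set α) : Set α :=
  {a ∈ B | ∃ c ∈ B, a < c}

theorem nonMax_subset : nonMax B ⊆ B :=
  Set.sep_subset _ _

theorem nonMax_eq_sdiff_singleton {M : α} (hM : IsGreatest B M) : nonMax B = B \ {M} := by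
  ext a
  refine and_congr_right fun ha => ⟨?_, fun haM => ⟨M, hM.1, (hM.2 ha).lt_of_ne haM⟩⟩
  rintro ⟨c, hc, hac⟩ rfl
  exact hac.not_ge (hM.2 hc)

theorem ncard_nonMax {k : ℕ} (hB : B.ncard = k + 1) : (nonMax B).ncard = k := by
  have hfin : B.Finite := Set.finite_of_ncard_ne_zero (by omega)
  obtain ⟨M, hM⟩ : ∃ M, IsGreatest B M :=
    Set.exists_max_image B id hfin (Set.nonempty_of_ncard_ne_zero (by omega))
  rw [nonMax_eq_sdiff_singleton hM, Set.ncard_sdiff_singleton_of_mem hM.1, hB, Nat.add_sub_cancel]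

end NonMax

section BlockOrder

variable {α β : Type*} [LinearOrder α] {A : Set α} {f : α → β} {x y : α}

/-- The blocks are the fibres of `f`. An element is low if it is listed in the second part of its
block: it is the least element of the block or belongs to `A`, and it is not the greatest element of
the block. -/
def IsLow (A : Set α) (f : α → β) (x : α) : Prop :=
  ¬ IsGreatest (f ⁻¹' {f x}) x ∧ (x ∈ A ∨ IsLeast (f ⁻¹' {f x}) x)

theorem isLow_iff_mem (hxy : x < y) {z : α} (hyz : y < z) (hfxy : f x = f y) (hfyz : f z = f y) :
    IsLow A f y ↔ y ∈ A := by
  have not_greatest : ¬ IsGreatest (f ⁻¹' {f y}) y := fun h => (h.2 hfyz).not_gt hyz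
  have not_least : ¬ IsLeast (f ⁻¹' {f y}) y := fun h => (h.2 hfxy).not_gt hxy
  simp only [IsLow, not_greatest, not_least, not_false_eq_true, true_and, or_false]

/-- The key by which the block order sorts: the block, then high elements before low ones (as
`False < True`), then the order of `α`. -/
def blockKey (A : Set α) (f : α → β) (x : α) : β ×ₗ Prop ×ₗ α :=
  toLex (f x, toLex (IsLow A f x, x))

theorem blockKey_injective (A : Set α) (f : α → β) : Function.Injective (blockKey A f) :=
  fun _ _ h => congrArg (fun key => (ofLex (ofLex key).2).2) h

variable [LinearOrder β]

/-- The order listing the blocks of `f` increasingly and, inside a block, first its high and then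
its low elements. -/
def blockRel (A : Set α) (f : α → β) (x y : α) : Prop :=
  blockKey A f x < blockKey A f y

theorem blockRel_iff_of_lt (hf : Monotone f) (hxy : x < y) :
    blockRel A f y x ↔ f x = f y ∧ IsLow A f x ∧ ¬ IsLow A f y := by
  have not_block_lt : ¬ f y < f x := (hf hxy.le).not_gt
  have low_lt_iff : IsLow A f y < IsLow A f x ↔ IsLow A f x ∧ ¬ IsLow A f y := by
    change (IsLow A f y → IsLow A f x) ∧ ¬ (IsLow A f x → IsLow A f y) ↔ _
    tauto
  rw [blockRel, blockKey, blockKey, Prod.Lex.toLex_lt_toLex, Prod.Lex.toLex_lt_toLex]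
  simp only [not_block_lt, hxy.not_gt, low_lt_iff, false_or, and_false, or_false,
    eq_comm (a := f y)]

theorem blockRel_greatest_least (hf : Monotone f) {v : β} (hx : IsLeast (f ⁻¹' {v}) x)
    (hy : IsGreatest (f ⁻¹' {v}) y) (hxy : x < y) : blockRel A f y x := by
  have hfx : f x = v := hx.1
  have hfy : f y = v := hy.1
  refine (blockRel_iff_of_lt hf hxy).2 ⟨hfx.trans hfy.symm, ⟨?_, Or.inr ?_⟩, fun h => h.1 ?_⟩
  · exact fun h => (h.2 (hfy.trans hfx.symm)).not_gt hxy
  · rwa [hfx]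
  · rwa [hfy]

theorem restrictRel_blockRel_mem_setAlternating {f : ℕ → β} (hf : Monotone f) (n : ℕ)
    (A : Set ℕ) : restrictRel (Set.Icc 1 n) (blockRel A f) ∈ setAlternating n A := by
  refine ⟨isLinearOrderOn_restrictRel_of_injective (blockKey_injective A f) _, ?_⟩
  intro a b c _ _ _ hab hbc
  constructor
  · rintro hb ⟨⟨-, -, hba⟩, -, -, hca⟩
    obtain ⟨hfab, -, hlow⟩ := (blockRel_iff_of_lt hf hab).1 hba
    obtain ⟨hfac, -, -⟩ := (blockRel_iff_of_lt hf (hab.trans hbc)).1 hca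
    exact hlow ((isLow_iff_mem hab hbc hfab (hfac.symm.trans hfab)).2 hb)
  · rintro hb ⟨⟨-, -, hca⟩, -, -, hcb⟩
    obtain ⟨hfac, -, -⟩ := (blockRel_iff_of_lt hf (hab.trans hbc)).1 hca
    obtain ⟨hfbc, hlow, -⟩ := (blockRel_iff_of_lt hf hbc).1 hcb
    exact hb ((isLow_iff_mem hab hbc (hfac.trans hfbc.symm) hfbc.symm).1 hlow)

end BlockOrder

section Cuts

variable {B S : Set ℕ} {b m : ℕ}

/-- The numbers `m` after which a block ends when each `s ∈ S` shares a block with its successor in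
`B`: those lying in no interval `[s, t)` with `s ∈ S` and `t` the successor of `s` in `B`. -/
def cuts (B S : Set ℕ) : Set ℕ :=
  {m | ∀ s ∈ S, s ≤ m → ∃ b ∈ B, s < b ∧ b ≤ m}

theorem mem_cuts_iff_notMem (hb : b ∈ B) : b ∈ cuts B S ↔ b ∉ S := by
  refine ⟨fun hcut hbS => ?_, fun hbS s hs hsb => ⟨b, hb, hsb.lt_of_ne ?_, le_rfl⟩⟩
  · obtain ⟨c, -, hbc, hcb⟩ := hcut b hbS le_rfl
    exact hbc.not_ge hcb
  · rintro rfl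
    exact hbS hs

theorem succ_mem_of_mem_cuts (hm : m ∉ cuts B S) (hm' : m + 1 ∈ cuts B S) : m + 1 ∈ B := by
  by_contra hB
  refine hm fun s hs hsm => ?_
  obtain ⟨b, hb, hsb, hbm⟩ := hm' s hs (by omega)
  have hne : b ≠ m + 1 := ne_of_mem_of_not_mem hb hB
  exact ⟨b, hb, hsb, by omega⟩

theorem mem_of_notMem_cuts (hm : m ∉ cuts B S) (hpred : ∀ l, l + 1 = m → l ∈ cuts B S) :
    m ∈ S := by
  by_contra hmS
  refine hm fun s hs hsm => ?_
  have hne : s ≠ m := ne_of_mem_of_not_mem hs hmS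
  obtain ⟨b, hb, hsb, hbm⟩ := hpred (m - 1) (by omega) s hs (by omega)
  exact ⟨b, hb, hsb, by omega⟩

open scoped Classical in
/-- The number of cuts before `m`, constant exactly on the blocks delimited by the cuts. -/
noncomputable def blockIndex (B S : Set ℕ) (m : ℕ) : ℕ :=
  Nat.count (· ∈ cuts B S) m

open scoped Classical in
theorem blockIndex_monotone (B S : Set ℕ) : Monotone (blockIndex B S) :=
  Nat.count_monotone _

open scoped Classical in
theorem blockIndex_succ_eq_iff : blockIndex B S (m + 1) = blockIndex B S m ↔ m ∉ cuts B S :=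
  Nat.count_succ_eq_count_iff

open scoped Classical in
theorem notMem_cuts_of_blockIndex_eq {x y : ℕ} (h : blockIndex B S x = blockIndex B S y)
    (hxm : x ≤ m) (hmy : m < y) : m ∉ cuts B S := fun hm =>
  ((blockIndex_monotone B S hxm).trans_lt (Nat.count_strict_mono hm hmy)).ne h

theorem exists_isLeast_block (B S : Set ℕ) (b : ℕ) :
    ∃ x, IsLeast (blockIndex B S ⁻¹' {blockIndex B S b}) x :=
  ⟨_, isLeast_csInf ⟨b, rfl⟩⟩

theorem exists_isGreatest_block {M : ℕ} (hbM : b ≤ M) (hM : M ∈ cuts B S) :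
    ∃ y, IsGreatest (blockIndex B S ⁻¹' {blockIndex B S b}) y := by
  refine BddAbove.exists_isGreatest_of_nonempty ⟨M, fun y hy => ?_⟩ ⟨b, rfl⟩
  by_contra! hMy
  exact notMem_cuts_of_blockIndex_eq (Eq.symm hy) hbM hMy hM

theorem isLeast_block_mem {x : ℕ} (hx : IsLeast (blockIndex B S ⁻¹' {blockIndex B S b}) x)
    (hcut : x ∉ cuts B S) : x ∈ S := by
  refine mem_of_notMem_cuts hcut ?_
  rintro l rfl
  by_contra hl
  exact (hx.2 ((blockIndex_succ_eq_iff.2 hl).symm.trans hx.1)).not_gt l.lt_succ_self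

theorem isGreatest_block_mem {y : ℕ} (hy : IsGreatest (blockIndex B S ⁻¹' {blockIndex B S b}) y)
    (hby : b < y) : y ∈ B := by
  obtain ⟨z, rfl⟩ := Nat.exists_eq_add_one_of_ne_zero (show y ≠ 0 by omega)
  refine succ_mem_of_mem_cuts
    (notMem_cuts_of_blockIndex_eq (Eq.symm hy.1) (Nat.le_of_lt_succ hby) z.lt_succ_self) ?_
  by_contra hcut
  exact (hy.2 ((blockIndex_succ_eq_iff.2 hcut).trans hy.1)).not_gt (z + 1).lt_succ_self

theorem mem_iff_exists_inversion (A : Set ℕ) (hB : B.Finite) (hS : S ⊆ nonMax B) (hb : b ∈ B) :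
    b ∈ S ↔ ∃ x y, x ≤ b ∧ b < y ∧ restrictRel B (blockRel A (blockIndex B S)) y x := by
  have hmono := blockIndex_monotone B S
  constructor
  · intro hbS
    obtain ⟨M, hM⟩ : ∃ M, IsGreatest B M := Set.exists_max_image B id hB ⟨b, hb⟩
    rw [nonMax_eq_sdiff_singleton hM] at hS
    have hMcut : M ∈ cuts B S := (mem_cuts_iff_notMem hM.1).2 fun hMS => (hS hMS).2 rfl
    have hbcut : b ∉ cuts B S := fun hcut => (mem_cuts_iff_notMem hb).1 hcut hbS
    obtain ⟨x, hx⟩ := exists_isLeast_block B S b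
    obtain ⟨y, hy⟩ := exists_isGreatest_block (hM.2 hb) hMcut
    have hxb : x ≤ b := hx.2 rfl
    have hby : b < y := hy.2 (blockIndex_succ_eq_iff.2 hbcut)
    have hxy : x < y := hxb.trans_lt hby
    have hxcut : x ∉ cuts B S := notMem_cuts_of_blockIndex_eq (hx.1.trans hy.1.symm) le_rfl hxy
    exact ⟨x, y, hxb, hby, isGreatest_block_mem hy hby, (hS (isLeast_block_mem hx hxcut)).1,
      blockRel_greatest_least hmono hx hy hxy⟩
  · rintro ⟨x, y, hxb, hby, -, -, hyx⟩
    have hxy := ((blockRel_iff_of_lt hmono (hxb.trans_lt hby)).1 hyx).1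
    by_contra hbS
    exact notMem_cuts_of_blockIndex_eq hxy hxb hby ((mem_cuts_iff_notMem hb).2 hbS)

theorem injOn_restrictRel_blockRel (A : Set ℕ) (hB : B.Finite) :
    Set.InjOn (fun S => restrictRel B (blockRel A (blockIndex B S))) (𝒫 (nonMax B)) := by
  intro S hS S' hS' heq
  ext b
  by_cases hb : b ∈ B
  · rw [mem_iff_exists_inversion A hB hS hb, mem_iff_exists_inversion A hB hS' hb]
    simp only [heq]
  · exact iff_of_false (fun hbS => hb (hS hbS).1) (fun hbS => hb (hS' hbS).1)

end Cuts

theorem isAbundant_setAlternating (n : ℕ) (A : Set ℕ) (k : ℕ) :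
    IsAbundant (Set.Icc 1 n) (setAlternating n A) (k + 1) (2 ^ k) := by
  intro B hBX hcard
  have hB : B.Finite := (Set.finite_Icc 1 n).subset hBX
  rw [← ncard_nonMax hcard, ← Set.ncard_powerset _ (hB.subset nonMax_subset)]
  refine Set.ncard_le_ncard_of_injOn _ (fun S _ => ?_) (injOn_restrictRel_blockRel A hB)
    (finite_restrictDom hB _)
  exact ⟨_, restrictRel_blockRel_mem_setAlternating (blockIndex_monotone B S) n A,
    restrictRel_restrictRel hBX _⟩

section NeverConditions

variable {α : Type*} [LinearOrder α] {B : Set α} {r : α → α → Prop} {a b : α}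

/-- No triple of `B` has its smallest element ranked last by `r`. -/
def SmallestNeverLast (B : Set α) (r : α → α → Prop) : Prop :=
  ∀ a ∈ B, ∀ b ∈ B, ∀ c ∈ B, a < b → b < c → ¬ (r b a ∧ r c a)

/-- No triple of `B` has its largest element ranked first by `r`. -/
def LargestNeverFirst (B : Set α) (r : α → α → Prop) : Prop :=
  ∀ a ∈ B, ∀ b ∈ B, ∀ c ∈ B, a < b → b < c → ¬ (r c a ∧ r c b)

/-- The elements of `B` ranked by `r` after some larger element of `B`. -/
def overtaken (B : Set α) (r : α → α → Prop) : Set α :=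
  {a ∈ B | ∃ c ∈ B, a < c ∧ r c a}

theorem overtaken_subset_nonMax : overtaken B r ⊆ nonMax B :=
  fun _ ⟨ha, c, hc, hac, _⟩ => ⟨ha, c, hc, hac⟩

namespace SmallestNeverLast

theorem notMem_overtaken (hn : SmallestNeverLast B r) (hr : IsLinearOrderOn B r) (hab : a < b)
    (hba : r b a) : b ∉ overtaken B r := by
  rintro ⟨hb, c, hc, hbc, hcb⟩
  have ha : a ∈ B := (hr.1 b a hba).2
  exact hn a ha b hb c hc hab hbc ⟨hba, hr.2.2.1 c hc b hb a ha hcb hba⟩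

theorem mem_overtaken (hn : SmallestNeverLast B r) (hr : IsLinearOrderOn B r) (hba : r b a)
    {m : α} (hm : m ∈ B) (ham : a ≤ m) (hmb : m < b) : m ∈ overtaken B r := by
  obtain ⟨hb, ha⟩ := hr.1 b a hba
  refine ⟨hm, b, hb, hmb, ?_⟩
  rcases ham.eq_or_lt with rfl | ham
  · exact hba
  · have hrma : r a m :=
      (hr.not_iff_swap ha hm ham.ne).1 fun hma => hn a ha m hm b hb ham hmb ⟨hma, hba⟩
    exact hr.2.2.1 b hb a ha m hm hba hrma

theorem inversion_iff (hn : SmallestNeverLast B r) (hr : IsLinearOrderOn B r) (ha : a ∈ B)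
    (hb : b ∈ B) (hab : a < b) :
    r b a ↔ b ∉ overtaken B r ∧ ∀ m ∈ B, a ≤ m → m < b → m ∈ overtaken B r := by
  refine ⟨fun hba => ⟨hn.notMem_overtaken hr hab hba, fun m => hn.mem_overtaken hr hba⟩, ?_⟩
  rintro ⟨hb_not, h_below⟩
  obtain ⟨-, c, hc, hac, hca⟩ := h_below a ha le_rfl hab
  have hbc : ¬ b < c := fun hbc => hb_not (hn.mem_overtaken hr hca hb hab.le hbc)
  have hcb : ¬ c < b := fun hcb => hn.notMem_overtaken hr hac hca (h_below c hc hac.le hcb)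
  rwa [le_antisymm (not_lt.1 hcb) (not_lt.1 hbc)]

theorem ncard_le_two_pow {D : Set (α → α → Prop)} {k : ℕ} (hB : B.ncard = k + 1)
    (hD : IsDomainOn B D) (hn : ∀ r ∈ D, SmallestNeverLast B r) : D.ncard ≤ 2 ^ k := by
  have hfin : B.Finite := Set.finite_of_ncard_ne_zero (by omega)
  have hfin' : (nonMax B).Finite := hfin.subset nonMax_subset
  rw [← ncard_nonMax hB, ← Set.ncard_powerset _ hfin']
  refine Set.ncard_le_ncard_of_injOn (overtaken B) (fun r _ => overtaken_subset_nonMax) ?_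
    hfin'.finite_subsets
  intro r hr r' hr' heq
  refine (hD r hr).ext_of_inversions (hD r' hr') fun a ha b hb hab => ?_
  rw [(hn r hr).inversion_iff (hD r hr) ha hb hab, (hn r' hr').inversion_iff (hD r' hr') ha hb hab,
    heq]

end SmallestNeverLast

theorem LargestNeverFirst.flip_dual (hn : LargestNeverFirst B r) :
    SmallestNeverLast (α := αᵒᵈ) (OrderDual.ofDual ⁻¹' B) (flip r) :=
  fun c hc b hb a ha hcb hba h => hn a ha b hb c hc hba hcb h.symm

theorem LargestNeverFirst.ncard_le_two_pow {D : Set (α → α → Prop)} {k : ℕ}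
    (hB : B.ncard = k + 1) (hD : IsDomainOn B D) (hn : ∀ r ∈ D, LargestNeverFirst B r) :
    D.ncard ≤ 2 ^ k := by
  rw [← Set.ncard_image_of_injective D (f := flip) fun r r' h => congrArg flip h]
  refine SmallestNeverLast.ncard_le_two_pow (α := αᵒᵈ) (B := OrderDual.ofDual ⁻¹' B) hB ?_ ?_
  · rintro _ ⟨r, hr, rfl⟩
    exact (hD r hr).flip
  · rintro _ ⟨r, hr, rfl⟩
    exact (hn r hr).flip_dual

end NeverConditions

section Exactness

variable {n : ℕ} {A B : Set ℕ}

theorem isDomainOn_restrictDom_setAlternating (hB : B ⊆ Set.Icc 1 n) :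
    IsDomainOn B (restrictDom B (setAlternating n A)) := by
  rintro _ ⟨r, hr, rfl⟩
  exact hr.1.restrictRel hB

theorem smallestNeverLast_of_mem_restrictDom (hB : B ⊆ Set.Icc 1 n) (hBA : B ∩ Set.Ioo 1 n ⊆ A)
    {r : ℕ → ℕ → Prop} (hr : r ∈ restrictDom B (setAlternating n A)) : SmallestNeverLast B r := by
  obtain ⟨r, hr, rfl⟩ := hr
  rintro a ha b hb c hc hab hbc ⟨hba, hca⟩
  have hbA : b ∈ A := hBA ⟨hb, (hB ha).1.trans_lt hab, hbc.trans_le (hB hc).2⟩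
  exact (hr.2 a b c (hB ha) (hB hb) (hB hc) hab hbc).1 hbA ⟨hba.2.2, hca.2.2⟩

theorem largestNeverFirst_of_mem_restrictDom (hB : B ⊆ Set.Icc 1 n) (hBA : B ∩ Set.Ioo 1 n ⊆ Aᶜ)
    {r : ℕ → ℕ → Prop} (hr : r ∈ restrictDom B (setAlternating n A)) : LargestNeverFirst B r := by
  obtain ⟨r, hr, rfl⟩ := hr
  rintro a ha b hb c hc hab hbc ⟨hca, hcb⟩
  have hbA : b ∉ A := hBA ⟨hb, (hB ha).1.trans_lt hab, hbc.trans_le (hB hc).2⟩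
  exact (hr.2 a b c (hB ha) (hB hb) (hB hc) hab hbc).2 hbA ⟨hca.2.2, hcb.2.2⟩

theorem exists_subset_inner_subset_or_subset_compl {k : ℕ} (A : Set ℕ) (hkn : k < n)
    (hk : 2 * k ≤ n + 1) :
    ∃ B ⊆ Set.Icc 1 n, B.ncard = k + 1 ∧
      (B ∩ Set.Ioo 1 n ⊆ A ∨ B ∩ Set.Ioo 1 n ⊆ Aᶜ) := by
  -- The endpoints `1` and `n` are never inner, so they may be added to both candidates.
  set P : Set ℕ := {b ∈ Set.Icc 1 n | b ∈ Set.Ioo 1 n → b ∈ A} with hP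
  set Q : Set ℕ := {b ∈ Set.Icc 1 n | b ∈ Set.Ioo 1 n → b ∉ A} with hQ
  have hcard : 2 * k + 1 ≤ P.ncard + Q.ncard := by
    have hunion : P ∪ Q = Set.Icc 1 n := by
      ext b
      simp only [hP, hQ, Set.mem_union, Set.mem_sep_iff]
      tauto
    have hinter : {1, n} ⊆ P ∩ Q := by
      rintro b (rfl | rfl) <;> simp [hP, hQ] <;> omega
    have hXcard : (Set.Icc 1 n).ncard = n := by simp [Set.ncard_eq_toFinset_card']
    have hPfin : P.Finite := (Set.finite_Icc 1 n).subset (Set.sep_subset _ _)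
    have hQfin : Q.Finite := (Set.finite_Icc 1 n).subset (Set.sep_subset _ _)
    have hsum := Set.ncard_union_add_ncard_inter P Q hPfin hQfin
    rw [hunion, hXcard] at hsum
    have hpair := Set.ncard_le_ncard hinter (hPfin.subset Set.inter_subset_left)
    rcases eq_or_ne 1 n with rfl | hn
    · omega
    · rw [Set.ncard_pair hn] at hpair
      omega
  rcases le_or_gt (k + 1) P.ncard with hkP | hkP
  · obtain ⟨B, hBP, hB⟩ := Set.exists_subset_card_eq hkP
    exact ⟨B, fun b hb => (hBP hb).1, hB, Or.inl fun b hb => (hBP hb.1).2 hb.2⟩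
  · obtain ⟨B, hBQ, hB⟩ := Set.exists_subset_card_eq (show k + 1 ≤ Q.ncard by omega)
    exact ⟨B, fun b hb => (hBQ hb).1, hB, Or.inr fun b hb => (hBQ hb.1).2 hb.2⟩

theorem not_isAbundant_setAlternating {k : ℕ} (A : Set ℕ) (hkn : k < n) (hk : 2 * k ≤ n + 1) :
    ¬ IsAbundant (Set.Icc 1 n) (setAlternating n A) (k + 1) (2 ^ k + 1) := by
  intro habundant
  obtain ⟨B, hBX, hB, hBA⟩ := exists_subset_inner_subset_or_subset_compl A hkn hk
  have hdomain := isDomainOn_restrictDom_setAlternating (A := A) hBX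
  refine (habundant B hBX hB).not_gt (Nat.lt_succ_of_le ?_)
  rcases hBA with hBA | hBA
  · exact SmallestNeverLast.ncard_le_two_pow hB hdomain fun _ =>
      smallestNeverLast_of_mem_restrictDom hBX hBA
  · exact LargestNeverFirst.ncard_le_two_pow hB hdomain fun _ =>
      largestNeverFirst_of_mem_restrictDom hBX hBA

end Exactness

theorem setAlternating_abundant_general (n : ℕ) (A : Set ℕ) (k : ℕ) :
    IsAbundant (Set.Icc 1 n) (setAlternating n A) (k + 1) (2 ^ k) ∧
      (k < n → 2 * k ≤ n + 1 →
        IsExactlyAbundant (Set.Icc 1 n) (setAlternating n A) (k + 1) (2 ^ k)) :=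
  ⟨isAbundant_setAlternating n A k, fun hkn hk =>
    ⟨isAbundant_setAlternating n A k, not_isAbundant_setAlternating A hkn hk⟩⟩

/-- For every `n ≥ 1`, `A ⊆ {1,…,n}` and `1 ≤ k ≤ n`, the set-alternating domain `D_A`
is `(k, 2^(k-1))`-abundant; moreover if `k < n/2` it is exactly `(k, 2^(k-1))`-abundant. -/
theorem setAlternating_abundant (n : ℕ) (hn : 1 ≤ n) (A : Set ℕ)
    (hA : A ⊆ Set.Icc 1 n) (k : ℕ) (hk1 : 1 ≤ k) (hkn : k ≤ n) :
    IsAbundant (Set.Icc 1 n) (setAlternating n A) k (2 ^ (k - 1)) ∧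
      (2 * k < n → IsExactlyAbundant (Set.Icc 1 n) (setAlternating n A) k (2 ^ (k - 1))) := by
  obtain ⟨k, rfl⟩ := Nat.exists_eq_add_of_le' hk1
  obtain ⟨habundant, hexact⟩ := setAlternating_abundant_general n A k
  exact ⟨habundant, fun h2k => hexact hkn (by omega)⟩
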